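/- Assume f satisfies (f1) and (f2) with constant B ∈ [1,∞), and let ψ, φ, ε₁, ε₂ be the Emden–Fowler model data. Define I(ρ) := f(φ(ρ))·F(φ(ρ)) · ( ψ'(ρ)² / ( g(ψ(ρ))²·G(ψ(ρ))² ) ) · ( f'(φ(ρ))·F(φ(ρ)) − g'(ψ(ρ))·G(ψ(ρ)) ). Then there exist C > 0 and ρ₀ > 1 such that for all ρ ≥ ρ₀: |I(ρ)| ≤ C · f(φ(ρ))·F(φ(ρ)) · ε₁(ρ) / ρ and |I'(ρ)| ≤ C · f(φ(ρ))·F(φ(ρ)) · ( ε₁(ρ) + ε₂(ρ) ) / ρ². -/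

import Mathlib

open MeasureTheory Filter

/-- `Fint f s = ∫_s^∞ dτ / f(τ)`. -/
noncomputable def Fint (f : ℝ → ℝ) (s : ℝ) : ℝ := ∫ τ in Set.Ioi s, 1 / f τ

/-- `1/B₁[f](s) = (−log F(s))·(1 − f'(s)·F(s))`, with `G` playing the role of `F`. -/
noncomputable def invB1 (f G : ℝ → ℝ) (s : ℝ) : ℝ :=
  (-Real.log (G s)) * (1 - deriv f s * G s)

/-- `1/B₂[f](s) = f'(s)·F(s)·(log F(s))²·(f(s)·f''(s)·F(s)/f'(s) − 1)`,
with `G` playing the role of `F`. -/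
noncomputable def invB2 (f G : ℝ → ℝ) (s : ℝ) : ℝ :=
  deriv f s * G s * (Real.log (G s)) ^ 2 *
    (f s * deriv (deriv f) s * G s / deriv f s - 1)

/-- The model singular solution `v`. -/
noncomputable def modelv (B t : ℝ) : ℝ :=
  if B = 1 then Real.log (-2 * Real.log t) else (-2 * Real.log t) ^ ((B - 1) / B)

/-- The model nonlinearity `g`. -/
noncomputable def modelg (B s : ℝ) : ℝ :=
  if B = 1 then 4 * Real.exp (Real.exp s - 2 * s)
  else (4 / (B * (B / (B - 1)))) * s ^ (1 - 2 * (B / (B - 1))) * Real.exp (s ^ (B / (B - 1)))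

/-- The model function `G(s) = ∫_s^∞ dτ/g(τ)` in closed form. -/
noncomputable def modelG (B s : ℝ) : ℝ :=
  if B = 1 then (1 / 4) * (Real.exp s + 1) * Real.exp (-Real.exp s)
  else (B / 4) * (s ^ (B / (B - 1)) + 1) * Real.exp (-(s ^ (B / (B - 1))))

/-- The Emden–Fowler model profile `ψ`. -/
noncomputable def modelpsi (B ρ : ℝ) : ℝ :=
  if B = 1 then Real.log (ρ - 1) else (ρ - 1) ^ ((B - 1) / B)

/-- `ε₁(ρ) = |1/B₁[f](φ(ρ)) − 1/B₁[g](ψ(ρ))|`. -/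
noncomputable def eps1 (f φ : ℝ → ℝ) (B ρ : ℝ) : ℝ :=
  |invB1 f (Fint f) (φ ρ) - invB1 (modelg B) (modelG B) (modelpsi B ρ)|

/-- `ε₂(ρ) = |1/B₂[f](φ(ρ)) − 1/B₂[g](ψ(ρ))|`. -/
noncomputable def eps2 (f φ : ℝ → ℝ) (B ρ : ℝ) : ℝ :=
  |invB2 f (Fint f) (φ ρ) - invB2 (modelg B) (modelG B) (modelpsi B ρ)|

/-- The inhomogeneous term
`I(ρ) = f(φ)F(φ) · ψ'² / (g(ψ)²G(ψ)²) · (f'(φ)F(φ) − g'(ψ)G(ψ))`. -/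
noncomputable def Ifun (f φ : ℝ → ℝ) (B ρ : ℝ) : ℝ :=
  f (φ ρ) * Fint f (φ ρ) *
    ((deriv (modelpsi B) ρ) ^ 2 / ((modelg B (modelpsi B ρ)) ^ 2 * (modelG B (modelpsi B ρ)) ^ 2)) *
    (deriv f (φ ρ) * Fint f (φ ρ) - deriv (modelg B) (modelpsi B ρ) * modelG B (modelpsi B ρ))

/-!
Both pairs `(h, K, χ) = (f, F, φ)` and `(g, G, ψ)` satisfy `K' = -1/h` and share the level
`K (χ ρ) = (B/4) ρ e^(1 - ρ)`, whose logarithmic derivative is `-(1 - 1/ρ)`. Hence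
`χ' = (1 - 1/ρ) h(χ) K(χ)`, and `I = f(φ) F(φ) (1 - 1/ρ)² D` with
`D = f'(φ) F(φ) - g'(ψ) G(ψ)`. Moreover `(h K)' = h' K - 1` and `h K (h' K)' = B₂⁻¹ / (log K)²`,
so `D` is a difference of `B₁⁻¹` divided by `log F(φ)`, and `D'` is a difference of `B₂⁻¹`
divided by `(log F(φ))²`, up to the factor `1 - 1/ρ`. As `log F(φ) ~ -ρ`, this bounds `I` and all
terms of `I'` except `(f'(φ) F(φ) - 1) D`, which needs the boundedness of `B₁[f]⁻¹`; under (f2)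
this holds because l'Hôpital's rule gives `B₁[f]⁻¹` the same limit as `B₂[f]⁻¹`.
-/

open Asymptotics Set Topology

/-! ### Inverse functions -/

section Inverse

variable {α β γ : Type*} [LinearOrder β] [LinearOrder γ] {K : β → γ} {χ : α → β} {a : β}

lemma continuousAt_of_strictAntiOn_comp [TopologicalSpace α] [TopologicalSpace β] [OrderTopology β]
    [DenselyOrdered β] [TopologicalSpace γ] [OrderClosedTopology γ] {x : α}
    (hK : StrictAntiOn K (Ioi a)) (hχ : ∀ᶠ r in 𝓝 x, a < χ r)
    (hKχ : ContinuousAt (fun r => K (χ r)) x) : ContinuousAt χ x := by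
  have hx : a < χ x := hχ.self_of_nhds
  refine tendsto_order.2 ⟨fun y hy => ?_, fun y hy => ?_⟩
  · obtain ⟨z, hz, hzx⟩ := exists_between (max_lt hx hy)
    obtain ⟨haz, hyz⟩ := max_lt_iff.1 hz
    filter_upwards [hχ, hKχ.eventually_lt_const (hK haz hx hzx)] with r hr hKr
    exact hyz.trans ((hK.lt_iff_gt hr haz).1 hKr)
  · have hay : a < y := hx.trans hy
    filter_upwards [hχ, hKχ.eventually_const_lt (hK hx hay hy)] with r hr hKr
    exact (hK.lt_iff_gt hay hr).1 hKr

lemma tendsto_atTop_of_strictAntiOn_comp [NoMaxOrder β] [TopologicalSpace γ]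
    [OrderClosedTopology γ] {l : Filter α} {c : γ}
    (hK : StrictAntiOn K (Ioi a)) (hc : ∀ s, a < s → c < K s) (hχ : ∀ᶠ r in l, a < χ r)
    (hKχ : Tendsto (fun r => K (χ r)) l (𝓝 c)) : Tendsto χ l atTop := by
  obtain ⟨a', ha'⟩ := exists_gt a
  refine tendsto_atTop.2 fun M => ?_
  have hM : a < max M a' := ha'.trans_le (le_max_right _ _)
  filter_upwards [hχ, hKχ.eventually_lt_const (hc _ hM)] with r hr hKr
  exact (le_max_left _ _).trans ((hK.lt_iff_gt hr hM).1 hKr).le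

end Inverse

lemma hasDerivAt_of_hasDerivAt_comp {𝕜 : Type*} [NontriviallyNormedField 𝕜] {K χ : 𝕜 → 𝕜}
    {k c x : 𝕜} (hK : HasDerivAt K k (χ x)) (hk : k ≠ 0) (hχ : ContinuousAt χ x)
    (hKχ : HasDerivAt (fun r => K (χ r)) c x) : HasDerivAt χ (c / k) x := by
  have hequiv : (fun r => K (χ r) - K (χ x)) ~[𝓝 x] fun r => (χ r - χ x) • k :=
    (HasDerivAtFilter.isEquivalent_sub hK hk).comp_tendsto
      (hχ.tendsto.prodMk tendsto_const_pure)
  have hlin : (fun r => (χ r - χ x) • k - (K (χ r) - K (χ x))) =o[𝓝 x] fun r => r - x :=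
    hequiv.symm.isLittleO.trans_isBigO hKχ.isBigO_sub
  refine .of_isLittleO (((hlin.add hKχ.isLittleO).const_mul_left k⁻¹).congr_left fun r => ?_)
  simp only [smul_eq_mul]
  field_simp
  ring

/-! ### Tail integrals -/

section Tail

variable {f : ℝ → ℝ} {s₀ s : ℝ}

lemma strictAntiOn_Fint (hpos : ∀ s, s₀ < s → 0 < f s)
    (hint : ∀ s, s₀ < s → IntegrableOn (fun τ => 1 / f τ) (Ioi s)) :
    StrictAntiOn (Fint f) (Ioi s₀) := by
  intro x hx y _ hxy
  have hsub := intervalIntegral.integral_Ioi_sub_Ioi (hint x hx) hxy.le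
  have hlt : 0 < ∫ τ in x..y, 1 / f τ :=
    intervalIntegral.intervalIntegral_pos_of_pos_on
      ((intervalIntegrable_iff_integrableOn_Ioc_of_le hxy.le).2
        ((hint x hx).mono_set Ioc_subset_Ioi_self))
      (fun τ hτ => one_div_pos.2 (hpos τ (lt_trans hx hτ.1))) hxy
  rw [← hsub] at hlt
  exact sub_pos.1 hlt

lemma Fint_pos (hpos : ∀ s, s₀ < s → 0 < f s)
    (hint : ∀ s, s₀ < s → IntegrableOn (fun τ => 1 / f τ) (Ioi s)) (hs : s₀ < s) :
    0 < Fint f s := by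
  have hs1 : s < s + 1 := lt_add_one s
  calc 0 ≤ Fint f (s + 1) := setIntegral_nonneg measurableSet_Ioi fun τ hτ =>
        (one_div_pos.2 (hpos τ ((hs.trans hs1).trans hτ))).le
    _ < Fint f s := strictAntiOn_Fint hpos hint hs (hs.trans hs1) hs1

lemma tendsto_Fint_atTop (f : ℝ → ℝ) : Tendsto (Fint f) atTop (𝓝 0) :=
  tendsto_integral_Ioi_zero tendsto_id

lemma hasDerivAt_Fint (hcont : ContinuousAt f s) (hne : f s ≠ 0)
    {m : ℝ} (hm : m < s) (hint : IntegrableOn (fun τ => 1 / f τ) (Ioi m)) :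
    HasDerivAt (Fint f) (-(1 / f s)) s := by
  have hcont' : ContinuousAt (fun τ => 1 / f τ) s := continuousAt_const.div hcont hne
  have hmeas : StronglyMeasurableAtFilter (fun τ => 1 / f τ) (𝓝 s) :=
    ⟨Ioi m, Ioi_mem_nhds hm, hint.aestronglyMeasurable⟩
  have hprim : HasDerivAt (fun x => ∫ τ in m..x, 1 / f τ) (1 / f s) s :=
    intervalIntegral.integral_hasDerivAt_right
      ((intervalIntegrable_iff_integrableOn_Ioc_of_le hm.le).2
        (hint.mono_set Ioc_subset_Ioi_self)) hmeas hcont'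
  refine (hprim.const_sub (Fint f m)).congr_of_eventuallyEq ?_
  filter_upwards [Ioi_mem_nhds hm] with x hx
  rw [← intervalIntegral.integral_Ioi_sub_Ioi hint (le_of_lt hx), Fint, Fint, sub_sub_cancel]

end Tail

section Pair

variable {h K χ : ℝ → ℝ} {s ρ a : ℝ}

lemma hasDerivAt_mul_tail (hh : DifferentiableAt ℝ h s) (h0 : h s ≠ 0)
    (hK : HasDerivAt K (-(1 / h s)) s) :
    HasDerivAt (fun s => h s * K s) (deriv h s * K s - 1) s := by
  refine (hh.hasDerivAt.mul hK).congr_deriv ?_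
  field_simp
  ring

lemma hasDerivAt_deriv_mul_tail (hh : ContDiffAt ℝ 2 h s) (h0 : h s ≠ 0)
    (h'0 : deriv h s ≠ 0) (hlog : Real.log (K s) ≠ 0) (hK : HasDerivAt K (-(1 / h s)) s) :
    HasDerivAt (fun s => deriv h s * K s)
      (invB2 h K s / (h s * K s * Real.log (K s) ^ 2)) s := by
  have hK0 : K s ≠ 0 := (Real.log_ne_zero.1 hlog).1
  have hh' : ContDiffAt ℝ 1 (deriv h) s := ContDiffAt.derivWithin (m := 1) hh (by norm_num)
  refine ((hh'.differentiableAt (by norm_num)).hasDerivAt.mul hK).congr_deriv ?_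
  simp only [invB2]
  field_simp
  ring

lemma hasDerivAt_inv_log_tail (hlog : Real.log (K s) ≠ 0) (hK : HasDerivAt K (-(1 / h s)) s) :
    HasDerivAt (fun s => (Real.log (K s))⁻¹) (1 / (h s * K s * Real.log (K s) ^ 2)) s := by
  refine ((hK.log (Real.log_ne_zero.1 hlog).1).fun_inv hlog).congr_deriv ?_
  field_simp

/-- l'Hôpital's rule applied to `(h' K - 1) / (log K)⁻¹`: the quotient of the derivatives is
`1 / B₂`. -/
lemma tendsto_invB1_of_tendsto_invB2 {l : Filter ℝ} (hh : ∀ᶠ s in atTop, ContDiffAt ℝ 2 h s)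
    (h0 : ∀ᶠ s in atTop, h s ≠ 0) (hK : ∀ᶠ s in atTop, HasDerivAt K (-(1 / h s)) s)
    (hK0 : Tendsto K atTop (𝓝[≠] 0)) (h1 : Tendsto (fun s => deriv h s * K s) atTop (𝓝 1))
    (h2 : Tendsto (invB2 h K) atTop l) : Tendsto (invB1 h K) atTop l := by
  have hlog : Tendsto (fun s => Real.log (K s)) atTop atBot :=
    Real.tendsto_log_nhdsNE_zero.comp hK0
  have hne : ∀ᶠ s in atTop, Real.log (K s) ≠ 0 := hlog.eventually_ne_atBot 0
  have h'0 : ∀ᶠ s in atTop, deriv h s ≠ 0 :=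
    (h1.eventually_ne one_ne_zero).mono fun _ => left_ne_zero_of_mul
  have key : Tendsto (fun s => (deriv h s * K s - 1) / (Real.log (K s))⁻¹) atTop l := by
    refine HasDerivAt.lhopital_zero_atTop
      (f' := fun s => invB2 h K s / (h s * K s * Real.log (K s) ^ 2))
      (g' := fun s => 1 / (h s * K s * Real.log (K s) ^ 2)) ?_ ?_ ?_ ?_ ?_ ?_
    · filter_upwards [hh, h0, h'0, hne, hK] with s hh h0 h'0 hne hK
      exact (hasDerivAt_deriv_mul_tail hh h0 h'0 hne hK).sub_const 1
    · filter_upwards [hne, hK] with s hne hK using hasDerivAt_inv_log_tail hne hK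
    · filter_upwards [h0, hne] with s h0 hne
      have := (Real.log_ne_zero.1 hne).1
      positivity
    · simpa using h1.sub_const 1
    · exact hlog.inv_tendsto_atBot
    · refine h2.congr' ?_
      filter_upwards [h0, hne] with s h0 hne
      have := (Real.log_ne_zero.1 hne).1
      field_simp
  refine key.congr fun s => ?_
  simp only [invB1, div_inv_eq_mul]
  ring

lemma hasDerivAt_of_tail_comp (h0 : h (χ ρ) ≠ 0) (hK : HasDerivAt K (-(1 / h (χ ρ))) (χ ρ))
    (hχ : ContinuousAt χ ρ) (hKχ : HasDerivAt (fun r => K (χ r)) (-(a * K (χ ρ))) ρ) :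
    HasDerivAt χ (a * (h (χ ρ) * K (χ ρ))) ρ := by
  have hK' : -(1 / h (χ ρ)) ≠ 0 := neg_ne_zero.2 (one_div_ne_zero h0)
  refine (hasDerivAt_of_hasDerivAt_comp hK hK' hχ hKχ).congr_deriv ?_
  field_simp

lemma hasDerivAt_mul_tail_comp (hh : DifferentiableAt ℝ h (χ ρ)) (h0 : h (χ ρ) ≠ 0)
    (hK : HasDerivAt K (-(1 / h (χ ρ))) (χ ρ))
    (hχ : HasDerivAt χ (a * (h (χ ρ) * K (χ ρ))) ρ) :
    HasDerivAt (fun r => h (χ r) * K (χ r))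
      (a * (h (χ ρ) * K (χ ρ)) * (deriv h (χ ρ) * K (χ ρ) - 1)) ρ :=
  ((hasDerivAt_mul_tail hh h0 hK).comp ρ hχ).congr_deriv (mul_comm _ _)

lemma hasDerivAt_deriv_mul_tail_comp (hh : ContDiffAt ℝ 2 h (χ ρ)) (h0 : h (χ ρ) ≠ 0)
    (h'0 : deriv h (χ ρ) ≠ 0) (hlog : Real.log (K (χ ρ)) ≠ 0)
    (hK : HasDerivAt K (-(1 / h (χ ρ))) (χ ρ))
    (hχ : HasDerivAt χ (a * (h (χ ρ) * K (χ ρ))) ρ) :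
    HasDerivAt (fun r => deriv h (χ r) * K (χ r))
      (a * invB2 h K (χ ρ) / Real.log (K (χ ρ)) ^ 2) ρ := by
  have hK0 : K (χ ρ) ≠ 0 := (Real.log_ne_zero.1 hlog).1
  refine ((hasDerivAt_deriv_mul_tail hh h0 h'0 hlog hK).comp ρ hχ).congr_deriv ?_
  field_simp

end Pair

/-! ### The model pair -/

section Model

variable {B s ρ : ℝ}

/-- The exponent in the model pair: `s ^ B'` for `B > 1` and `e ^ s` for `B = 1`. It unifies the
two cases, since `ψ` is its inverse up to the shift `ρ ↦ ρ - 1`. -/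
noncomputable def modelExponent (B s : ℝ) : ℝ :=
  if B = 1 then Real.exp s else s ^ (B / (B - 1))

/-- The common value `F (φ ρ) = G (ψ ρ)` in the Emden–Fowler model data. -/
noncomputable def modelLevel (B ρ : ℝ) : ℝ := (B / 4) * ρ * Real.exp (-ρ + 1)

lemma modelG_eq (B s : ℝ) :
    modelG B s = (B / 4) * (modelExponent B s + 1) * Real.exp (-modelExponent B s) := by
  unfold modelG modelExponent
  split_ifs with h
  · rw [h]
  · rfl

lemma modelg_one : modelg 1 = fun s => 4 * Real.exp (Real.exp s - 2 * s) :=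
  funext fun _ => if_pos rfl

lemma modelg_of_ne_one (h : B ≠ 1) :
    modelg B = fun s => (4 / (B * (B / (B - 1)))) * s ^ (1 - 2 * (B / (B - 1))) *
      Real.exp (s ^ (B / (B - 1))) :=
  funext fun _ => if_neg h

lemma modelExponent_modelpsi (hB : 1 ≤ B) (hρ : 1 < ρ) :
    modelExponent B (modelpsi B ρ) = ρ - 1 := by
  have hρ' : 0 < ρ - 1 := sub_pos.2 hρ
  unfold modelExponent modelpsi
  split_ifs with h
  · exact Real.exp_log hρ'
  · have hB' : B / (B - 1) ≠ 0 := div_ne_zero (by linarith) (sub_ne_zero.2 h)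
    rw [← inv_div, Real.rpow_inv_rpow hρ'.le hB']

lemma modelG_modelpsi (hB : 1 ≤ B) (hρ : 1 < ρ) :
    modelG B (modelpsi B ρ) = modelLevel B ρ := by
  rw [modelG_eq, modelExponent_modelpsi hB hρ, modelLevel, sub_add_cancel, neg_sub', sub_neg_eq_add]

lemma modelpsi_pos (B : ℝ) (hρ : 2 < ρ) : 0 < modelpsi B ρ := by
  have hρ' : 1 < ρ - 1 := by linarith
  unfold modelpsi
  split_ifs
  · exact Real.log_pos hρ'
  · positivity

lemma continuousAt_modelpsi (B : ℝ) (hρ : 1 < ρ) : ContinuousAt (modelpsi B) ρ := by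
  have hρ' : ρ - 1 ≠ 0 := (sub_pos.2 hρ).ne'
  unfold modelpsi
  split_ifs
  · exact ContinuousAt.log (by fun_prop) hρ'
  · exact ContinuousAt.rpow_const (by fun_prop) (Or.inl hρ')

lemma modelg_pos (hB : 1 ≤ B) (hs : 0 < s) : 0 < modelg B s := by
  unfold modelg
  split_ifs with h
  · positivity
  · have : 0 < B - 1 := sub_pos.2 (lt_of_le_of_ne' hB h)
    positivity

lemma contDiffAt_modelg (B : ℝ) (hs : s ≠ 0) {n : WithTop ℕ∞} : ContDiffAt ℝ n (modelg B) s := by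
  unfold modelg
  split_ifs <;> fun_prop (disch := assumption)

lemma hasDerivAt_modelG (hB : 1 ≤ B) (hs : 0 < s) :
    HasDerivAt (modelG B) (-(1 / modelg B s)) s := by
  rcases eq_or_ne B 1 with rfl | h
  · simp only [funext (modelG_eq 1), modelExponent, modelg_one, if_true]
    have hexp := Real.hasDerivAt_exp s
    refine (((hexp.add_const 1).const_mul (1 / 4)).mul hexp.fun_neg.exp).congr_deriv ?_
    simp only [Real.exp_neg, Real.exp_sub, two_mul, Real.exp_add]
    field_simp
    ring
  · have : 0 < B - 1 := sub_pos.2 (lt_of_le_of_ne' hB h)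
    simp only [funext (modelG_eq B), modelExponent, modelg_of_ne_one h, if_neg h]
    set b := B / (B - 1)
    have hb : 0 < b := by positivity
    have hpow : HasDerivAt (fun s : ℝ => s ^ b) (b * (s ^ b / s)) s := by
      simpa only [Real.rpow_sub_one hs.ne'] using Real.hasDerivAt_rpow_const (Or.inl hs.ne')
    have hsplit : s ^ (1 - 2 * b) = s / (s ^ b * s ^ b) := by
      rw [Real.rpow_sub hs, Real.rpow_one, two_mul, Real.rpow_add hs]
    refine (((hpow.add_const 1).const_mul (B / 4)).mul hpow.fun_neg.exp).congr_deriv ?_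
    have := Real.rpow_pos_of_pos hs b
    simp only [Real.exp_neg, hsplit]
    field_simp
    ring

lemma deriv_modelg_pos (hB : 1 ≤ B) (hs : 0 < s) (hexp : 2 < modelExponent B s) :
    0 < deriv (modelg B) s := by
  have hg := modelg_pos hB hs
  rcases eq_or_ne B 1 with rfl | h
  · have hd : HasDerivAt (modelg 1) (modelg 1 s * (modelExponent 1 s - 2)) s := by
      simp only [modelg_one, modelExponent, if_true]
      refine (((Real.hasDerivAt_exp s).fun_sub
        ((hasDerivAt_id s).const_mul 2)).exp.const_mul 4).congr_deriv ?_
      simp only [id]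
      ring
    rw [hd.deriv]
    exact mul_pos hg (sub_pos.2 hexp)
  · have : 0 < B - 1 := sub_pos.2 (lt_of_le_of_ne' hB h)
    have hd : HasDerivAt (modelg B)
        (modelg B s * ((B / (B - 1) * (modelExponent B s - 2) + 1) / s)) s := by
      simp only [modelg_of_ne_one h, modelExponent, if_neg h]
      set b := B / (B - 1)
      have hpow (p : ℝ) : HasDerivAt (fun s : ℝ => s ^ p) (p * (s ^ p / s)) s := by
        simpa only [Real.rpow_sub_one hs.ne'] using Real.hasDerivAt_rpow_const (Or.inl hs.ne')
      refine (((hpow (1 - 2 * b)).const_mul (4 / (B * b))).mul (hpow b).exp).congr_deriv ?_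
      ring
    rw [hd.deriv]
    have : 0 < modelExponent B s - 2 := sub_pos.2 hexp
    positivity

lemma hasDerivAt_modelLevel (B : ℝ) (hρ : ρ ≠ 0) :
    HasDerivAt (modelLevel B) (-((1 - 1 / ρ) * modelLevel B ρ)) ρ := by
  refine (((hasDerivAt_id ρ).const_mul (B / 4)).mul
    ((hasDerivAt_id ρ).neg.add_const 1).exp).congr_deriv ?_
  simp only [modelLevel, id, Pi.neg_apply]
  field_simp
  ring

lemma isEquivalent_log_modelLevel (hB : 0 < B) :
    (fun ρ => Real.log (modelLevel B ρ)) ~[atTop] fun ρ => -ρ := by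
  have hlow : (fun ρ => Real.log ρ + (Real.log (B / 4) + 1)) =o[atTop] fun ρ : ℝ => -ρ :=
    (Real.isLittleO_log_id_atTop.add (isLittleO_const_id_atTop _)).neg_right
  refine (IsEquivalent.refl.add_isLittleO hlow).congr_left ?_
  filter_upwards [eventually_gt_atTop 0] with ρ hρ
  simp only [Pi.add_apply]
  rw [modelLevel, Real.log_mul (by positivity) (by positivity),
    Real.log_mul (by positivity) hρ.ne', Real.log_exp]
  ring

lemma eventually_log_modelLevel_ne_zero (hB : 0 < B) :
    ∀ᶠ ρ in atTop, Real.log (modelLevel B ρ) ≠ 0 :=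
  have hlog := (isEquivalent_log_modelLevel hB).symm.tendsto_atBot tendsto_neg_atTop_atBot
  hlog.eventually_ne_atBot 0

lemma isBigO_inv_log_modelLevel (hB : 0 < B) :
    (fun ρ => (Real.log (modelLevel B ρ))⁻¹) =O[atTop] fun ρ => ρ⁻¹ := by
  have h : (fun ρ => (Real.log (modelLevel B ρ))⁻¹) =O[atTop] fun ρ => (-ρ)⁻¹ :=
    (isEquivalent_log_modelLevel hB).inv.isBigO
  simpa only [inv_neg, isBigO_neg_right] using h

lemma tendsto_modelLevel_atTop (B : ℝ) : Tendsto (modelLevel B) atTop (𝓝 0) := by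
  have h := (Real.tendsto_pow_mul_exp_neg_atTop_nhds_zero 1).const_mul (B / 4 * Real.exp 1)
  rw [mul_zero] at h
  refine h.congr fun ρ => ?_
  rw [modelLevel, Real.exp_add]
  ring

end Model

/-! ### The inhomogeneous term -/

/-- The Emden–Fowler data: `f` is `C²` and positive on `(s₀, ∞)` with `1 / f` integrable at
infinity, and `φ` solves `F (φ ρ) = (B / 4) ρ e ^ (1 - ρ)` for `ρ > 1`. -/
structure IsEmdenFowlerProfile (f φ : ℝ → ℝ) (s₀ B : ℝ) : Prop where
  contDiffOn : ContDiffOn ℝ 2 f (Ioi s₀)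
  pos : ∀ s, s₀ < s → 0 < f s
  integrableOn : ∀ s, s₀ < s → IntegrableOn (fun τ => 1 / f τ) (Ioi s)
  one_le : 1 ≤ B
  lt_apply : ∀ ρ > (1 : ℝ), s₀ < φ ρ
  Fint_apply : ∀ ρ > (1 : ℝ), Fint f (φ ρ) = modelLevel B ρ

/-- The last factor `f'(φ) F(φ) - g'(ψ) G(ψ)` of the inhomogeneous term `I`. -/
noncomputable def slopeGap (f φ : ℝ → ℝ) (B ρ : ℝ) : ℝ :=
  deriv f (φ ρ) * Fint f (φ ρ) - deriv (modelg B) (modelpsi B ρ) * modelG B (modelpsi B ρ)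

/-- The difference `1 / B₂[f](φ) - 1 / B₂[g](ψ)`, whose absolute value is `ε₂`. -/
noncomputable def invB2Gap (f φ : ℝ → ℝ) (B ρ : ℝ) : ℝ :=
  invB2 f (Fint f) (φ ρ) - invB2 (modelg B) (modelG B) (modelpsi B ρ)

lemma eps1_nonneg (f φ : ℝ → ℝ) (B ρ : ℝ) : 0 ≤ eps1 f φ B ρ := abs_nonneg _

lemma eps2_nonneg (f φ : ℝ → ℝ) (B ρ : ℝ) : 0 ≤ eps2 f φ B ρ := abs_nonneg _

lemma hasDerivAt_modelpsi {B ρ : ℝ} (hB : 1 ≤ B) (hρ : 2 < ρ) :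
    HasDerivAt (modelpsi B)
      ((1 - 1 / ρ) * (modelg B (modelpsi B ρ) * modelG B (modelpsi B ρ))) ρ := by
  have hψ := modelpsi_pos B hρ
  have hρ1 : 1 < ρ := by linarith
  refine hasDerivAt_of_tail_comp (modelg_pos hB hψ).ne' (hasDerivAt_modelG hB hψ)
    (continuousAt_modelpsi B hρ1) ?_
  rw [modelG_modelpsi hB hρ1]
  refine (hasDerivAt_modelLevel B (by linarith)).congr_of_eventuallyEq ?_
  filter_upwards [Ioi_mem_nhds hρ1] with r hr using modelG_modelpsi hB hr

lemma isBigO_one_sub_one_div_pow (n : ℕ) :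
    (fun ρ : ℝ => (1 - 1 / ρ) ^ n) =O[atTop] fun _ => (1 : ℝ) := by
  have h : Tendsto (fun ρ : ℝ => (1 - 1 / ρ) ^ n) atTop (𝓝 ((1 - 0) ^ n)) :=
    ((tendsto_const_nhds.div_atTop tendsto_id).const_sub 1).pow n
  exact h.isBigO_one ℝ

namespace IsEmdenFowlerProfile

variable {f φ : ℝ → ℝ} {s₀ B ρ : ℝ}

lemma B_pos (H : IsEmdenFowlerProfile f φ s₀ B) : 0 < B := one_pos.trans_le H.one_le

lemma contDiffAt (H : IsEmdenFowlerProfile f φ s₀ B) (hρ : 1 < ρ) : ContDiffAt ℝ 2 f (φ ρ) :=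
  H.contDiffOn.contDiffAt (Ioi_mem_nhds (H.lt_apply ρ hρ))

lemma f_pos (H : IsEmdenFowlerProfile f φ s₀ B) (hρ : 1 < ρ) : 0 < f (φ ρ) :=
  H.pos _ (H.lt_apply ρ hρ)

lemma mul_Fint_pos (H : IsEmdenFowlerProfile f φ s₀ B) (hρ : 1 < ρ) :
    0 < f (φ ρ) * Fint f (φ ρ) :=
  mul_pos (H.f_pos hρ) (Fint_pos H.pos H.integrableOn (H.lt_apply ρ hρ))

lemma hasDerivAt_Fint (H : IsEmdenFowlerProfile f φ s₀ B) (hρ : 1 < ρ) :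
    HasDerivAt (Fint f) (-(1 / f (φ ρ))) (φ ρ) := by
  obtain ⟨m, hm, hmφ⟩ := exists_between (H.lt_apply ρ hρ)
  exact _root_.hasDerivAt_Fint (H.contDiffAt hρ).continuousAt (H.f_pos hρ).ne' hmφ
    (H.integrableOn m hm)

lemma hasDerivAt_Fint_comp (H : IsEmdenFowlerProfile f φ s₀ B) (hρ : 1 < ρ) :
    HasDerivAt (fun r => Fint f (φ r)) (-((1 - 1 / ρ) * Fint f (φ ρ))) ρ := by
  rw [H.Fint_apply ρ hρ]
  refine (hasDerivAt_modelLevel B (by linarith)).congr_of_eventuallyEq ?_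
  filter_upwards [Ioi_mem_nhds hρ] with r hr using H.Fint_apply r hr

lemma hasDerivAt (H : IsEmdenFowlerProfile f φ s₀ B) (hρ : 1 < ρ) :
    HasDerivAt φ ((1 - 1 / ρ) * (f (φ ρ) * Fint f (φ ρ))) ρ := by
  have hcomp := H.hasDerivAt_Fint_comp hρ
  refine hasDerivAt_of_tail_comp (H.f_pos hρ).ne' (H.hasDerivAt_Fint hρ) ?_ hcomp
  refine continuousAt_of_strictAntiOn_comp (strictAntiOn_Fint H.pos H.integrableOn) ?_
    hcomp.continuousAt
  filter_upwards [Ioi_mem_nhds hρ] with r hr using H.lt_apply r hr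

lemma tendsto_atTop (H : IsEmdenFowlerProfile f φ s₀ B) : Tendsto φ atTop atTop := by
  refine tendsto_atTop_of_strictAntiOn_comp (strictAntiOn_Fint H.pos H.integrableOn)
    (fun s => Fint_pos H.pos H.integrableOn) ?_ ((tendsto_modelLevel_atTop B).congr' ?_)
  · filter_upwards [eventually_gt_atTop 1] with r hr using H.lt_apply r hr
  · filter_upwards [eventually_gt_atTop 1] with r hr using (H.Fint_apply r hr).symm

lemma Ifun_eq (H : IsEmdenFowlerProfile f φ s₀ B) (hρ : 2 < ρ) :
    Ifun f φ B ρ = f (φ ρ) * Fint f (φ ρ) * (1 - 1 / ρ) ^ 2 * slopeGap f φ B ρ := by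
  have hρ1 : 1 < ρ := by linarith
  have hg := (modelg_pos H.one_le (modelpsi_pos B hρ)).ne'
  have hG : modelG B (modelpsi B ρ) ≠ 0 := by
    rw [modelG_modelpsi H.one_le hρ1, ← H.Fint_apply ρ hρ1]
    exact right_ne_zero_of_mul (H.mul_Fint_pos hρ1).ne'
  rw [Ifun, (hasDerivAt_modelpsi H.one_le hρ).deriv, ← slopeGap, mul_pow, mul_pow,
    mul_div_cancel_right₀ _ (by positivity)]

lemma abs_log_mul_abs_slopeGap (H : IsEmdenFowlerProfile f φ s₀ B) (hρ : 1 < ρ) :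
    |Real.log (modelLevel B ρ)| * |slopeGap f φ B ρ| = eps1 f φ B ρ := by
  rw [eps1, invB1, invB1, modelG_modelpsi H.one_le hρ, H.Fint_apply ρ hρ, ← abs_mul, slopeGap,
    modelG_modelpsi H.one_le hρ, H.Fint_apply ρ hρ]
  ring_nf

lemma isBigO_slopeGap (H : IsEmdenFowlerProfile f φ s₀ B) :
    slopeGap f φ B =O[atTop] fun ρ => ρ⁻¹ * eps1 f φ B ρ := by
  have hlog := (isBigO_inv_log_modelLevel H.B_pos).mul (isBigO_refl (eps1 f φ B) atTop)
  refine isBigO_norm_left.1 (hlog.norm_left.congr' ?_ .rfl)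
  filter_upwards [eventually_gt_atTop 1, eventually_log_modelLevel_ne_zero H.B_pos] with ρ hρ hlog
  rw [← H.abs_log_mul_abs_slopeGap hρ, ← abs_mul, norm_mul, norm_inv, norm_abs_eq_norm, norm_mul,
    inv_mul_cancel_left₀ (norm_ne_zero_iff.2 hlog)]

lemma isBigO_deriv_mul_Fint_sub_one (H : IsEmdenFowlerProfile f φ s₀ B)
    (hB1 : invB1 f (Fint f) =O[atTop] fun _ => (1 : ℝ)) :
    (fun ρ => deriv f (φ ρ) * Fint f (φ ρ) - 1) =O[atTop] fun ρ => ρ⁻¹ := by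
  have hprod := (isBigO_inv_log_modelLevel H.B_pos).mul (hB1.comp_tendsto H.tendsto_atTop)
  simp only [Function.comp_def, mul_one] at hprod
  refine hprod.congr' ?_ .rfl
  filter_upwards [eventually_gt_atTop 1, eventually_log_modelLevel_ne_zero H.B_pos] with ρ hρ hlog
  simp only [invB1, H.Fint_apply ρ hρ]
  field_simp
  ring

lemma eventually_deriv_ne_zero (H : IsEmdenFowlerProfile f φ s₀ B)
    (hB1 : invB1 f (Fint f) =O[atTop] fun _ => (1 : ℝ)) :
    ∀ᶠ ρ in atTop, deriv f (φ ρ) ≠ 0 := by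
  have hlim := (H.isBigO_deriv_mul_Fint_sub_one hB1).trans_tendsto tendsto_inv_atTop_zero
  filter_upwards [hlim.eventually_ne (by norm_num : (0 : ℝ) ≠ -1)] with ρ hρ h
  simp [h] at hρ

lemma eventually_hasDerivAt_slopeGap (H : IsEmdenFowlerProfile f φ s₀ B)
    (hB1 : invB1 f (Fint f) =O[atTop] fun _ => (1 : ℝ)) :
    ∀ᶠ ρ in atTop, HasDerivAt (slopeGap f φ B)
      ((1 - 1 / ρ) * (invB2Gap f φ B ρ * (Real.log (modelLevel B ρ))⁻¹ ^ 2)) ρ := by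
  filter_upwards [eventually_gt_atTop 3, eventually_log_modelLevel_ne_zero H.B_pos,
    H.eventually_deriv_ne_zero hB1] with ρ hρ hlog hf'
  have hρ1 : 1 < ρ := by linarith
  have hρ2 : 2 < ρ := by linarith
  have hψ := modelpsi_pos B hρ2
  have hF := H.Fint_apply ρ hρ1
  have hG := modelG_modelpsi H.one_le hρ1
  have hg' := deriv_modelg_pos H.one_le hψ
    (by rw [modelExponent_modelpsi H.one_le hρ1]; linarith)
  have hf := hasDerivAt_deriv_mul_tail_comp (H.contDiffAt hρ1) (H.f_pos hρ1).ne' hf'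
    (hF ▸ hlog) (H.hasDerivAt_Fint hρ1) (H.hasDerivAt hρ1)
  have hg := hasDerivAt_deriv_mul_tail_comp (contDiffAt_modelg B hψ.ne')
    (modelg_pos H.one_le hψ).ne' hg'.ne' (hG ▸ hlog) (hasDerivAt_modelG H.one_le hψ)
    (hasDerivAt_modelpsi H.one_le hρ2)
  refine (hf.sub hg).congr_deriv ?_
  rw [hF, hG, invB2Gap]
  field_simp

lemma eventually_deriv_Ifun_eq (H : IsEmdenFowlerProfile f φ s₀ B)
    (hB1 : invB1 f (Fint f) =O[atTop] fun _ => (1 : ℝ)) :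
    ∀ᶠ ρ in atTop, deriv (Ifun f φ B) ρ = f (φ ρ) * Fint f (φ ρ) *
      ((1 - 1 / ρ) ^ 3 * ((deriv f (φ ρ) * Fint f (φ ρ) - 1) * slopeGap f φ B ρ
          + invB2Gap f φ B ρ * (Real.log (modelLevel B ρ))⁻¹ ^ 2)
        + 2 * (1 - 1 / ρ) * (ρ⁻¹ ^ 2 * slopeGap f φ B ρ)) := by
  filter_upwards [eventually_gt_atTop 2, H.eventually_hasDerivAt_slopeGap hB1] with ρ hρ hgap
  have hρ1 : 1 < ρ := by linarith
  have hP := hasDerivAt_mul_tail_comp ((H.contDiffAt hρ1).differentiableAt two_ne_zero)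
    (H.f_pos hρ1).ne' (H.hasDerivAt_Fint hρ1) (H.hasDerivAt hρ1)
  have ha : HasDerivAt (fun r : ℝ => (1 - 1 / r) ^ 2) (2 * (1 - 1 / ρ) * ρ⁻¹ ^ 2) ρ := by
    simp only [one_div]
    refine (((hasDerivAt_inv (by linarith)).const_sub 1).fun_pow 2).congr_deriv ?_
    norm_num
  have hI := ((hP.mul ha).mul hgap).congr_of_eventuallyEq (f₁ := Ifun f φ B) <| by
    filter_upwards [Ioi_mem_nhds hρ] with r hr using H.Ifun_eq hr
  rw [hI.deriv, Pi.mul_apply]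
  ring

lemma isBigO_Ifun (H : IsEmdenFowlerProfile f φ s₀ B) :
    Ifun f φ B =O[atTop] fun ρ => f (φ ρ) * Fint f (φ ρ) * (ρ⁻¹ * eps1 f φ B ρ) := by
  have hI := ((isBigO_refl (fun ρ => f (φ ρ) * Fint f (φ ρ)) atTop).mul
    (isBigO_one_sub_one_div_pow 2)).mul H.isBigO_slopeGap
  simp only [mul_one] at hI
  refine hI.congr' ?_ .rfl
  filter_upwards [eventually_gt_atTop 2] with ρ hρ using (H.Ifun_eq hρ).symm

lemma isBigO_deriv_Ifun (H : IsEmdenFowlerProfile f φ s₀ B)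
    (hB1 : invB1 f (Fint f) =O[atTop] fun _ => (1 : ℝ)) :
    deriv (Ifun f φ B) =O[atTop] fun ρ =>
      f (φ ρ) * Fint f (φ ρ) * (ρ⁻¹ ^ 2 * (eps1 f φ B ρ + eps2 f φ B ρ)) := by
  set ε : ℝ → ℝ := fun ρ => eps1 f φ B ρ + eps2 f φ B ρ
  have hε₁ : eps1 f φ B =O[atTop] ε := .of_norm_le fun ρ => by
    rw [Real.norm_of_nonneg (eps1_nonneg f φ B ρ)]
    exact le_add_of_nonneg_right (eps2_nonneg f φ B ρ)
  have hε₂ : invB2Gap f φ B =O[atTop] ε :=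
    .of_norm_le fun ρ => le_add_of_nonneg_left (eps1_nonneg f φ B ρ)
  have hgap : slopeGap f φ B =O[atTop] fun ρ => ρ⁻¹ * ε ρ :=
    H.isBigO_slopeGap.trans ((isBigO_refl _ _).mul hε₁)
  have hgap_one : slopeGap f φ B =O[atTop] ε := by
    simpa only [one_mul] using
      hgap.trans ((tendsto_inv_atTop_zero.isBigO_one ℝ).mul (isBigO_refl ε _))
  have hlevel : (fun ρ => (deriv f (φ ρ) * Fint f (φ ρ) - 1) * slopeGap f φ B ρ) =O[atTop]
      fun ρ => ρ⁻¹ ^ 2 * ε ρ :=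
    ((H.isBigO_deriv_mul_Fint_sub_one hB1).mul hgap).congr_right fun ρ => by ring
  have hslope : (fun ρ => invB2Gap f φ B ρ * (Real.log (modelLevel B ρ))⁻¹ ^ 2) =O[atTop]
      fun ρ => ρ⁻¹ ^ 2 * ε ρ :=
    (hε₂.mul ((isBigO_inv_log_modelLevel H.B_pos).pow 2)).congr_right fun ρ => mul_comm _ _
  have hweight : (fun ρ => ρ⁻¹ ^ 2 * slopeGap f φ B ρ) =O[atTop] fun ρ => ρ⁻¹ ^ 2 * ε ρ :=
    (isBigO_refl _ _).mul hgap_one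
  have hsum := ((isBigO_one_sub_one_div_pow 3).mul (hlevel.add hslope)).add
    (((isBigO_one_sub_one_div_pow 1).const_mul_left 2).mul hweight)
  simp only [pow_one, one_mul] at hsum
  exact ((isBigO_refl _ _).mul hsum).congr'
    ((H.eventually_deriv_Ifun_eq hB1).mono fun _ h => h.symm) .rfl

end IsEmdenFowlerProfile

lemma isBigO_invB1_Fint {f : ℝ → ℝ} {s₀ l : ℝ} (hf : ContDiffOn ℝ 2 f (Ioi s₀))
    (hpos : ∀ s, s₀ < s → 0 < f s)
    (hint : ∀ s, s₀ < s → IntegrableOn (fun τ => 1 / f τ) (Ioi s))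
    (h1 : Tendsto (fun s => deriv f s * Fint f s) atTop (𝓝 1))
    (h2 : Tendsto (invB2 f (Fint f)) atTop (𝓝 l)) :
    invB1 f (Fint f) =O[atTop] fun _ => (1 : ℝ) := by
  have hs : ∀ᶠ s in atTop, s₀ < s := eventually_gt_atTop s₀
  have hcont : ∀ s, s₀ < s → ContDiffAt ℝ 2 f s := fun s hs =>
    hf.contDiffAt (Ioi_mem_nhds hs)
  refine (tendsto_invB1_of_tendsto_invB2 (hs.mono hcont)
    (hs.mono fun s hs => (hpos s hs).ne') (hs.mono fun s hs => ?_)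
    (tendsto_nhdsWithin_iff.2 ⟨tendsto_Fint_atTop f,
      hs.mono fun s hs => (Fint_pos hpos hint hs).ne'⟩) h1 h2).isBigO_one ℝ
  obtain ⟨m, hm, hms⟩ := exists_between hs
  exact hasDerivAt_Fint (hcont s hs).continuousAt (hpos s hs).ne' hms (hint m hm)

theorem stmt7_general (f φ : ℝ → ℝ) (s₀ B : ℝ)
    (hf : ContDiffOn ℝ 2 f (Set.Ioi s₀))
    (hfpos : ∀ s, s₀ < s → 0 < f s)
    (hfint : ∀ s, s₀ < s → IntegrableOn (fun τ => 1 / f τ) (Set.Ioi s))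
    (hB : 1 ≤ B)
    (hB1 : invB1 f (Fint f) =O[atTop] fun _ => (1 : ℝ))
    (hφ : ∀ ρ > (1 : ℝ), s₀ < φ ρ ∧ Fint f (φ ρ) = (B / 4) * ρ * Real.exp (-ρ + 1)) :
    ∃ C > (0 : ℝ), ∃ ρ₀ > (1 : ℝ), ∀ ρ ≥ ρ₀,
      |Ifun f φ B ρ| ≤ C * f (φ ρ) * Fint f (φ ρ) * eps1 f φ B ρ / ρ
      ∧ |deriv (Ifun f φ B) ρ|
          ≤ C * f (φ ρ) * Fint f (φ ρ) * (eps1 f φ B ρ + eps2 f φ B ρ) / ρ ^ 2 := by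
  have H : IsEmdenFowlerProfile f φ s₀ B :=
    ⟨hf, hfpos, hfint, hB, fun ρ hρ => (hφ ρ hρ).1, fun ρ hρ => (hφ ρ hρ).2⟩
  obtain ⟨C, ⟨hI, hI'⟩, hC⟩ := ((isBigO_iff_eventually.1 H.isBigO_Ifun).and
    (isBigO_iff_eventually.1 (H.isBigO_deriv_Ifun hB1))).and (eventually_gt_atTop 0) |>.exists
  obtain ⟨ρ₀, hρ₀⟩ := eventually_atTop.1 (hI.and hI')
  refine ⟨C, hC, max ρ₀ 2, lt_max_of_lt_right one_lt_two, fun ρ hρ => ?_⟩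
  obtain ⟨hbound, hbound'⟩ := hρ₀ ρ (le_of_max_le_left hρ)
  have hρ2 : 2 ≤ ρ := le_of_max_le_right hρ
  have hP := H.mul_Fint_pos (ρ := ρ) (by linarith)
  have hε₁ := eps1_nonneg f φ B ρ
  have hε₂ := eps2_nonneg f φ B ρ
  rw [Real.norm_eq_abs, Real.norm_of_nonneg (by positivity)] at hbound hbound'
  exact ⟨hbound.trans_eq (by ring), hbound'.trans_eq (by ring)⟩

/-- Lemma 2.1: `|I(ρ)| ≤ C f(φ)F(φ) ε₁(ρ)/ρ` and
`|I'(ρ)| ≤ C f(φ)F(φ)(ε₁(ρ)+ε₂(ρ))/ρ²` for large `ρ`. -/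
theorem stmt7 (f φ : ℝ → ℝ) (s₀ B : ℝ) (hs₀ : 0 < s₀)
    (hf : ContDiffOn ℝ 2 f (Set.Ioi s₀))
    (hfpos : ∀ s, s₀ < s → 0 < f s)
    (hf' : ∀ s, s₀ < s → 0 < deriv f s)
    (hfint : ∀ s, s₀ < s → IntegrableOn (fun τ => 1 / f τ) (Set.Ioi s))
    (hB : 1 ≤ B)
    (hf2a : Tendsto (fun s => deriv f s * Fint f s) atTop (nhds 1))
    (hf2b : Tendsto (fun s => invB2 f (Fint f) s) atTop (nhds (1 / B)))
    (hφ : ∀ ρ > (1 : ℝ), s₀ < φ ρ ∧ Fint f (φ ρ) = (B / 4) * ρ * Real.exp (-ρ + 1)) :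
    ∃ C > (0 : ℝ), ∃ ρ₀ > (1 : ℝ), ∀ ρ ≥ ρ₀,
      |Ifun f φ B ρ| ≤ C * f (φ ρ) * Fint f (φ ρ) * eps1 f φ B ρ / ρ
      ∧ |deriv (Ifun f φ B) ρ|
          ≤ C * f (φ ρ) * Fint f (φ ρ) * (eps1 f φ B ρ + eps2 f φ B ρ) / ρ ^ 2 := by
  exact stmt7_general f φ s₀ B hf hfpos hfint hB
    (isBigO_invB1_Fint hf hfpos hfint hf2a hf2b) hφ
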